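/- Let M be a cochain complex of k-vector spaces and (N_n)_{n} a descending sequence of subcomplexes of M. Then for every integer r there is a natural exact sequence ∏_n h^{r−1}(M/N_n) →^∂ ∏_n h^{r−1}(M/N_n) →^σ h^r(lim_n M/N_n) →^ι ∏_n h^r(M/N_n) →^∂ ∏_n h^r(M/N_n), where lim_n M/N_n is the componentwise inverse limit of complexes, ∂ sends a sequence (a_n) to the sequence (a_n − a_{n+1}) (where a_{n+1} is first mapped to the n-th term along the projection M/N_{n+1} → M/N_n), ι is induced by the projections, and σ sends (a_n) to the class of the compatible sequence with n-th entry ∑_{i=1}^{n−1} d a_i. -/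

import Mathlib

/-!
The sequence is the `lim`/`lim¹` (Milnor) sequence of the tower `M/N_m`, proved on representatives.
A class in `h^s(M/N_m)` is represented by a cochain `x` of `M` with `d x ∈ N_m`, and a class in
`h^s(lim M/N_m)` by a sequence of such cochains with `x_{m+1} - x_m ∈ N_m` (every element of the
limit lifts termwise, since each `M → M/N_m` is onto). In these terms all the maps are explicit,
and equality of classes is a membership in the `N_m` (`qcls_eq_iff`, `lcls_eq_iff`).

For `b_m` with `d b_m ∈ N_m` the partial sums `∑_{i<m} d b_i` are compatible cocycles. They are
changed only by coboundaries of the limit complex when the `b_m` change within their classes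
(`sigmaCls_congr`), because `∑_{i<m} n_i` is compatible whenever `n_i ∈ N_i`. This defines `σ`.
Each exactness claim then produces a witness by telescoping: `e_m - ∑_{i<m} b_i` for the kernel
of `σ`, `e_{m+1} - e_m` for the kernel of `ι`, and `x_m + ∑_{i<m} d e_i` for the kernel of `∂`.
-/

noncomputable section

/-- A cochain complex of `k`-vector spaces. -/
structure FCx (k : Type) [Field k] : Type 1 where
  X : ℤ → Type
  [acg : ∀ n, AddCommGroup (X n)]
  [mod : ∀ n, Module k (X n)]
  d : ∀ n, X n →ₗ[k] X (n + 1)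
  d_d : ∀ n x, d (n + 1) (d n x) = 0

attribute [instance] FCx.acg FCx.mod

variable {k : Type} [Field k]

/-- Transport along an equality of degrees. -/
def FCx.cast (M : FCx k) {a b : ℤ} (h : a = b) : M.X a →ₗ[k] M.X b := by
  subst h; exact LinearMap.id

/-- Cocycles in degree `r`. -/
def FCx.cocy (M : FCx k) (r : ℤ) : Submodule k (M.X r) :=
  LinearMap.ker (M.d r)

/-- Coboundaries in degree `r`. -/
def FCx.bdry (M : FCx k) (r : ℤ) : Submodule k (M.X r) :=
  LinearMap.range ((M.cast (by omega : (r - 1) + 1 = r)).comp (M.d (r - 1)))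

/-- Cohomology in degree `r`. -/
def FCx.H (M : FCx k) (r : ℤ) : Type :=
  ↥(M.cocy r) ⧸ ((M.bdry r).comap (M.cocy r).subtype)

instance (M : FCx k) (r : ℤ) : AddCommGroup (M.H r) :=
  inferInstanceAs (AddCommGroup (↥(M.cocy r) ⧸ ((M.bdry r).comap (M.cocy r).subtype)))

instance (M : FCx k) (r : ℤ) : Module k (M.H r) :=
  inferInstanceAs (Module k (↥(M.cocy r) ⧸ ((M.bdry r).comap (M.cocy r).subtype)))

/-- The class in cohomology of a cocycle. -/
def FCx.cls (M : FCx k) (r : ℤ) (x : M.X r) (hx : M.d r x = 0) : M.H r :=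
  Submodule.Quotient.mk ⟨x, LinearMap.mem_ker.mpr hx⟩


/-- The induced map on cohomology of a chain map. -/
def FCx.Hmap (P Q : FCx k) (f : ∀ n, P.X n →ₗ[k] Q.X n)
    (hf : ∀ n z, f (n + 1) (P.d n z) = Q.d n (f n z)) (r : ℤ) :
    P.H r →ₗ[k] Q.H r := by
  have hc : ∀ (a b : ℤ) (h : a = b) (z : P.X a), f b (P.cast h z) = Q.cast h (f a z) := by
    intro a b h z
    subst h
    rfl
  refine Submodule.mapQ _ _ (LinearMap.restrict (f r) ?_) ?_
  · intro x hx
    show f r x ∈ LinearMap.ker (Q.d r)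
    rw [LinearMap.mem_ker, ← hf, LinearMap.mem_ker.mp hx, map_zero]
  · intro x hx
    obtain ⟨y, hy⟩ := Submodule.mem_comap.mp hx
    refine Submodule.mem_comap.mpr ⟨f (r - 1) y, ?_⟩
    show ((Q.cast _).comp (Q.d (r - 1))) (f (r - 1) y) = f r ↑x
    rw [LinearMap.comp_apply, ← hf (r - 1) y, ← hc ((r - 1) + 1) r (by omega)]
    rw [show P.cast (by omega : (r - 1) + 1 = r) (P.d (r - 1) y) =
      ((P.cast (by omega : (r - 1) + 1 = r)).comp (P.d (r - 1))) y from rfl, hy]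
    rfl

/-- The quotient complex `M / N_m`. -/
def towerQ (M : FCx k) (N : ℕ → ∀ n : ℤ, Submodule k (M.X n))
    (hstable : ∀ m n, N m n ≤ (N m (n + 1)).comap (M.d n)) (m : ℕ) : FCx k where
  X n := M.X n ⧸ N m n
  d n := Submodule.mapQ (N m n) (N m (n + 1)) (M.d n) (hstable m n)
  d_d n x := by
    refine Quotient.inductionOn' x ?_
    intro y
    rw [Submodule.Quotient.mk''_eq_mk, Submodule.mapQ_apply, Submodule.mapQ_apply, M.d_d]
    exact (Submodule.Quotient.mk_eq_zero _).mpr (Submodule.zero_mem _)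

variable (M : FCx k) (N : ℕ → ∀ n : ℤ, Submodule k (M.X n))
  (hdesc : ∀ m n, N (m + 1) n ≤ N m n)
  (hstable : ∀ m n, N m n ≤ (N m (n + 1)).comap (M.d n))

/-- The projection `M / N_{m+1} → M / N_m` (the tower is descending). -/
def towerProj (m : ℕ) (n : ℤ) :
    (towerQ M N hstable (m + 1)).X n →ₗ[k] (towerQ M N hstable m).X n :=
  Submodule.mapQ (N (m + 1) n) (N m n) LinearMap.id (fun x hx => hdesc m n hx)

theorem towerProj_d (m : ℕ) (n : ℤ) (x : (towerQ M N hstable (m + 1)).X n) :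
    towerProj M N hdesc hstable m (n + 1) ((towerQ M N hstable (m + 1)).d n x) =
      (towerQ M N hstable m).d n (towerProj M N hdesc hstable m n x) := by
  refine Quotient.inductionOn' x ?_
  intro y
  show towerProj M N hdesc hstable m (n + 1)
      ((towerQ M N hstable (m + 1)).d n (Submodule.Quotient.mk y)) =
    (towerQ M N hstable m).d n
      (towerProj M N hdesc hstable m n (Submodule.Quotient.mk y))
  unfold towerProj towerQ
  simp only [Submodule.mapQ_apply, LinearMap.id_apply]

/-- The componentwise inverse limit `lim_m M / N_m` in degree `n`, as a
submodule of the product. -/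
def towerLimSub (n : ℤ) : Submodule k (∀ m : ℕ, (towerQ M N hstable m).X n) where
  carrier := {x | ∀ m, towerProj M N hdesc hstable m n (x (m + 1)) = x m}
  add_mem' := fun hx hy => by
    intro m
    simp only [Pi.add_apply, map_add, hx m, hy m]
  zero_mem' := fun m => by simp
  smul_mem' := fun c x hx => by
    intro m
    simp only [Pi.smul_apply, map_smul, hx m]

/-- The inverse limit complex `lim_m M / N_m`. -/
def towerLim : FCx k where
  X n := ↥(towerLimSub M N hdesc hstable n)
  d n := LinearMap.restrict
    (LinearMap.pi (fun m => ((towerQ M N hstable m).d n).comp (LinearMap.proj m)))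
    (by
      intro x hx m
      show towerProj M N hdesc hstable m (n + 1)
          ((towerQ M N hstable (m + 1)).d n (x (m + 1))) =
        (towerQ M N hstable m).d n (x m)
      rw [towerProj_d, hx m])
  d_d n x := by
    apply Subtype.ext
    funext m
    show (towerQ M N hstable m).d (n + 1) ((towerQ M N hstable m).d n (x.1 m)) = 0
    exact (towerQ M N hstable m).d_d n (x.1 m)

/-- The map induced on cohomology by the tower projections. -/
def towerHproj (m : ℕ) (s : ℤ) :
    (towerQ M N hstable (m + 1)).H s →ₗ[k] (towerQ M N hstable m).H s :=
  FCx.Hmap _ _ (fun n => towerProj M N hdesc hstable m n)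
    (fun n z => towerProj_d M N hdesc hstable m n z) s

/-- The map induced on cohomology by projection from the limit. -/
def towerHlimProj (m : ℕ) (s : ℤ) :
    (towerLim M N hdesc hstable).H s →ₗ[k] (towerQ M N hstable m).H s :=
  FCx.Hmap (towerLim M N hdesc hstable) (towerQ M N hstable m)
    (fun n => (LinearMap.proj m).comp (towerLimSub M N hdesc hstable n).subtype)
    (fun n z => rfl) s

/-! ### Cohomology classes in terms of representatives in `M` -/

/-- The differential `M^{r-1} → M^r`, that is `d (r - 1)` with its target transported along
`(r - 1) + 1 = r`; its range is `M.bdry r`. -/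
def FCx.delta (M : FCx k) (r : ℤ) : M.X (r - 1) →ₗ[k] M.X r :=
  (M.cast (by omega : (r - 1) + 1 = r)).comp (M.d (r - 1))

theorem FCx.d_delta (M : FCx k) (r : ℤ) (x : M.X (r - 1)) : M.d r (M.delta r x) = 0 := by
  have key : ∀ (a b : ℤ) (h : a = b) (z : M.X a), M.d a z = 0 → M.d b (M.cast h z) = 0 := by
    intro a b h z hz
    subst h
    exact hz
  exact key _ _ _ _ (M.d_d _ _)

theorem FCx.cls_eq_iff (M : FCx k) (r : ℤ) (x y : M.X r) (hx : M.d r x = 0)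
    (hy : M.d r y = 0) : M.cls r x hx = M.cls r y hy ↔ ∃ e, M.delta r e = x - y :=
  Submodule.Quotient.eq _

theorem FCx.exists_cls (M : FCx k) (r : ℤ) (α : M.H r) : ∃ x hx, α = M.cls r x hx := by
  obtain ⟨⟨x, hx⟩, rfl⟩ := Submodule.Quotient.mk_surjective _ α
  exact ⟨x, hx, rfl⟩

theorem towerQ_cast (m : ℕ) {a b : ℤ} (h : a = b) (x : M.X a) :
    (towerQ M N hstable m).cast h (Submodule.Quotient.mk x) =
      (Submodule.Quotient.mk (M.cast h x) : M.X b ⧸ N m b) := by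
  subst h
  rfl

theorem towerQ_delta (m : ℕ) (r : ℤ) (x : M.X (r - 1)) :
    (towerQ M N hstable m).delta r (Submodule.Quotient.mk x) =
      (Submodule.Quotient.mk (M.delta r x) : M.X r ⧸ N m r) :=
  towerQ_cast M N hstable m _ _

theorem towerLim_cast {a b : ℤ} (h : a = b) (x : (towerLim M N hdesc hstable).X a) (m : ℕ) :
    ((towerLim M N hdesc hstable).cast h x).1 m = (towerQ M N hstable m).cast h (x.1 m) := by
  subst h
  rfl

theorem towerLim_delta (r : ℤ) (x : (towerLim M N hdesc hstable).X (r - 1)) (m : ℕ) :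
    ((towerLim M N hdesc hstable).delta r x).1 m = (towerQ M N hstable m).delta r (x.1 m) :=
  towerLim_cast M N hdesc hstable _ _ m

/-- Being a cocycle modulo `N_m` can be tested on `delta`, since the submodules `N_m` are
compatible with transport of degrees. -/
theorem delta_mem_iff (m : ℕ) (r : ℤ) (x : M.X (r - 1)) :
    M.delta r x ∈ N m r ↔ M.d (r - 1) x ∈ N m ((r - 1) + 1) := by
  have key : ∀ (a b : ℤ) (h : a = b) (z : M.X a), M.cast h z ∈ N m b ↔ z ∈ N m a := by
    intro a b h z
    subst h
    rfl
  exact key _ _ _ _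

/-- The class in `h^s(M/N_m)` of a cochain `x` of `M` with `d x ∈ N_m`. -/
def qcls (m : ℕ) (s : ℤ) (x : M.X s) (hx : M.d s x ∈ N m (s + 1)) :
    (towerQ M N hstable m).H s :=
  (towerQ M N hstable m).cls s (Submodule.Quotient.mk x)
    ((Submodule.Quotient.mk_eq_zero _).mpr hx)

/-- The class in `h^s(lim M/N_m)` of the compatible sequence of cocycles `(x_m mod N_m)_m`. -/
def lcls (s : ℤ) (x : ℕ → M.X s) (hc : ∀ m, x (m + 1) - x m ∈ N m s)
    (hx : ∀ m, M.d s (x m) ∈ N m (s + 1)) : (towerLim M N hdesc hstable).H s :=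
  (towerLim M N hdesc hstable).cls s
    ⟨fun m => Submodule.Quotient.mk (x m), fun m => (Submodule.Quotient.eq _).mpr (hc m)⟩
    (Subtype.ext (funext fun m => (Submodule.Quotient.mk_eq_zero _).mpr (hx m)))

theorem exists_qcls (m : ℕ) (s : ℤ) (α : (towerQ M N hstable m).H s) :
    ∃ x hx, α = qcls M N hstable m s x hx := by
  obtain ⟨x, hx, rfl⟩ := FCx.exists_cls _ _ α
  obtain ⟨x, rfl⟩ := Submodule.Quotient.mk_surjective _ x
  exact ⟨x, (Submodule.Quotient.mk_eq_zero _).mp hx, rfl⟩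

theorem exists_lift (s : ℤ) (C : towerLimSub M N hdesc hstable s) :
    ∃ x : ℕ → M.X s, (∀ m, x (m + 1) - x m ∈ N m s) ∧
      ∀ m, C.1 m = (Submodule.Quotient.mk (x m) : M.X s ⧸ N m s) := by
  have h := fun m => Submodule.Quotient.mk_surjective (N m s) (C.1 m)
  choose x hx using h
  refine ⟨x, fun m => (Submodule.Quotient.eq _).mp ?_, fun m => (hx m).symm⟩
  have h1 := C.2 m
  rw [← hx m, ← hx (m + 1)] at h1
  exact h1

theorem exists_lcls (s : ℤ) (α : (towerLim M N hdesc hstable).H s) :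
    ∃ x hc hx, α = lcls M N hdesc hstable s x hc hx := by
  obtain ⟨C, hC, rfl⟩ := FCx.exists_cls _ _ α
  obtain ⟨x, hc, hx⟩ := exists_lift M N hdesc hstable s C
  obtain rfl : C = ⟨fun m => Submodule.Quotient.mk (x m),
    fun m => (Submodule.Quotient.eq _).mpr (hc m)⟩ := Subtype.ext (funext hx)
  exact ⟨x, hc, fun m => (Submodule.Quotient.mk_eq_zero _).mp
    (congrFun (congrArg Subtype.val hC) m), rfl⟩

theorem qcls_eq_iff (m : ℕ) (s : ℤ) (x y : M.X s) (hx : M.d s x ∈ N m (s + 1))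
    (hy : M.d s y ∈ N m (s + 1)) :
    qcls M N hstable m s x hx = qcls M N hstable m s y hy ↔
      ∃ e, M.delta s e - (x - y) ∈ N m s := by
  refine (FCx.cls_eq_iff _ _ _ _ _ _).trans ⟨?_, ?_⟩
  · rintro ⟨e, he⟩
    obtain ⟨e, rfl⟩ := Submodule.Quotient.mk_surjective _ e
    rw [towerQ_delta] at he
    exact ⟨e, (Submodule.Quotient.eq _).mp he⟩
  · rintro ⟨e, he⟩
    exact ⟨Submodule.Quotient.mk e, (towerQ_delta M N hstable m s e).trans
      ((Submodule.Quotient.eq _).mpr he)⟩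

theorem lcls_eq_iff (s : ℤ) (x y : ℕ → M.X s) (hc : ∀ m, x (m + 1) - x m ∈ N m s)
    (hx : ∀ m, M.d s (x m) ∈ N m (s + 1)) (hc' : ∀ m, y (m + 1) - y m ∈ N m s)
    (hy : ∀ m, M.d s (y m) ∈ N m (s + 1)) :
    lcls M N hdesc hstable s x hc hx = lcls M N hdesc hstable s y hc' hy ↔
      ∃ e : ℕ → M.X (s - 1), (∀ m, e (m + 1) - e m ∈ N m (s - 1)) ∧
        ∀ m, M.delta s (e m) - (x m - y m) ∈ N m s := by
  refine (FCx.cls_eq_iff _ _ _ _ _ _).trans ⟨?_, ?_⟩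
  · rintro ⟨E, hE⟩
    obtain ⟨e, hec, he⟩ := exists_lift M N hdesc hstable _ E
    refine ⟨e, hec, fun m => (Submodule.Quotient.eq _).mp ?_⟩
    have h1 := congrFun (congrArg Subtype.val hE) m
    rw [towerLim_delta, he m, towerQ_delta] at h1
    exact h1
  · rintro ⟨e, hec, he⟩
    refine ⟨⟨fun m => Submodule.Quotient.mk (e m),
      fun m => (Submodule.Quotient.eq _).mpr (hec m)⟩, Subtype.ext (funext fun m => ?_)⟩
    exact (towerLim_delta M N hdesc hstable s _ m).trans
      ((towerQ_delta M N hstable m s (e m)).trans ((Submodule.Quotient.eq _).mpr (he m)))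

theorem qcls_sub (m : ℕ) (s : ℤ) (x y : M.X s) (hx : M.d s x ∈ N m (s + 1))
    (hy : M.d s y ∈ N m (s + 1)) (h : M.d s (x - y) ∈ N m (s + 1)) :
    qcls M N hstable m s x hx - qcls M N hstable m s y hy = qcls M N hstable m s (x - y) h :=
  rfl

theorem towerHproj_qcls (m : ℕ) (s : ℤ) (x : M.X s) (hx : M.d s x ∈ N (m + 1) (s + 1)) :
    towerHproj M N hdesc hstable m s (qcls M N hstable (m + 1) s x hx) =
      qcls M N hstable m s x (hdesc m _ hx) :=
  rfl

theorem towerHlimProj_lcls (m : ℕ) (s : ℤ) (x : ℕ → M.X s)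
    (hc : ∀ m, x (m + 1) - x m ∈ N m s) (hx : ∀ m, M.d s (x m) ∈ N m (s + 1)) :
    towerHlimProj M N hdesc hstable m s (lcls M N hdesc hstable s x hc hx) =
      qcls M N hstable m s (x m) (hx m) :=
  rfl

/-! ### The connecting map -/

/-- The partial sums `∑_{i<m} d b_i` form a compatible sequence of cocycles; this is its class in
`h^r(lim M/N_m)`. -/
def sigmaCls (r : ℤ) (b : ℕ → M.X (r - 1))
    (hb : ∀ m, M.d (r - 1) (b m) ∈ N m ((r - 1) + 1)) : (towerLim M N hdesc hstable).H r :=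
  lcls M N hdesc hstable r (fun m => ∑ i ∈ Finset.range m, M.delta r (b i))
    (fun m => by
      rw [Finset.sum_range_succ, add_sub_cancel_left]
      exact (delta_mem_iff M N m r _).mpr (hb m))
    (fun m => by
      rw [map_sum, Finset.sum_eq_zero fun i _ => M.d_delta r (b i)]
      exact Submodule.zero_mem _)

/-- The class of the partial sums depends only on the classes of the `b_m` in
`h^{r-1}(M/N_m)`: if `b_m - b'_m = d e_m + n_m` with `n_m ∈ N_m`, the two sequences of partial
sums differ by the coboundary of the compatible sequence `∑_{i<m} n_i`. -/
theorem sigmaCls_congr (r : ℤ) (b b' : ℕ → M.X (r - 1))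
    (hb : ∀ m, M.d (r - 1) (b m) ∈ N m ((r - 1) + 1))
    (hb' : ∀ m, M.d (r - 1) (b' m) ∈ N m ((r - 1) + 1))
    (h : ∀ m, qcls M N hstable m (r - 1) (b m) (hb m) =
      qcls M N hstable m (r - 1) (b' m) (hb' m)) :
    sigmaCls M N hdesc hstable r b hb = sigmaCls M N hdesc hstable r b' hb' := by
  have h1 := fun m => (qcls_eq_iff M N hstable m _ _ _ _ _).mp (h m)
  choose e he using h1
  refine (lcls_eq_iff M N hdesc hstable r _ _ _ _ _ _).mpr
    ⟨fun m => ∑ i ∈ Finset.range m, (b i - b' i - M.delta (r - 1) (e i)), fun m => ?_,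
      fun m => ?_⟩
  · beta_reduce
    rw [Finset.sum_range_succ, add_sub_cancel_left]
    exact sub_mem_comm_iff.mp (he m)
  · have h0 : ∀ i, M.delta r (M.delta (r - 1) (e i)) = 0 := fun i => by
      rw [FCx.delta, LinearMap.comp_apply, M.d_delta, map_zero]
    simp only [map_sum, map_sub, h0, Finset.sum_sub_distrib, Finset.sum_const_zero, sub_zero,
      sub_self]
    exact Submodule.zero_mem _

/-- The connecting map `σ : ∏ h^{r-1}(M/N_m) → h^r(lim M/N_m)`, computed from a choice of
representatives. -/
def sigmaMap (r : ℤ) (a : ∀ m, (towerQ M N hstable m).H (r - 1)) :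
    (towerLim M N hdesc hstable).H r :=
  sigmaCls M N hdesc hstable r
    (fun m => (exists_qcls M N hstable m (r - 1) (a m)).choose)
    (fun m => (exists_qcls M N hstable m (r - 1) (a m)).choose_spec.choose)

theorem sigmaMap_qcls (r : ℤ) (b : ℕ → M.X (r - 1))
    (hb : ∀ m, M.d (r - 1) (b m) ∈ N m ((r - 1) + 1)) :
    sigmaMap M N hdesc hstable r (fun m => qcls M N hstable m (r - 1) (b m) (hb m)) =
      sigmaCls M N hdesc hstable r b hb :=
  sigmaCls_congr M N hdesc hstable r _ _ _ _ fun m =>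
    (exists_qcls M N hstable m (r - 1) _).choose_spec.choose_spec.symm

theorem exists_qcls_seq (s : ℤ) (a : ∀ m, (towerQ M N hstable m).H s) :
    ∃ (b : ℕ → M.X s) (hb : ∀ m, M.d s (b m) ∈ N m (s + 1)),
      a = fun m => qcls M N hstable m s (b m) (hb m) := by
  choose b hb h using fun m => exists_qcls M N hstable m s (a m)
  exact ⟨b, hb, funext h⟩

theorem lcls_zero (s : ℤ) :
    (0 : (towerLim M N hdesc hstable).H s) = lcls M N hdesc hstable s (fun _ => 0)
      (fun m => by rw [sub_zero]; exact Submodule.zero_mem _)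
      (fun m => by rw [map_zero]; exact Submodule.zero_mem _) :=
  rfl

theorem qcls_zero (m : ℕ) (s : ℤ) :
    (0 : (towerQ M N hstable m).H s) = qcls M N hstable m s 0
      (by rw [map_zero]; exact Submodule.zero_mem _) :=
  rfl

/-! ### Exactness -/

/-- `σ ∘ ∂ = 0`: the partial sums telescope to `d b_0 - d b_m`, and `d b_m ∈ N_m`. -/
theorem sigmaMap_diff (r : ℤ) (a : ∀ m, (towerQ M N hstable m).H (r - 1)) :
    sigmaMap M N hdesc hstable r
      (fun m => a m - towerHproj M N hdesc hstable m (r - 1) (a (m + 1))) = 0 := by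
  obtain ⟨b, hb, rfl⟩ := exists_qcls_seq M N hstable (r - 1) a
  have hd : ∀ m, M.d (r - 1) (b m - b (m + 1)) ∈ N m ((r - 1) + 1) := fun m => by
    rw [map_sub]
    exact Submodule.sub_mem _ (hb m) (hdesc m _ (hb (m + 1)))
  refine (sigmaMap_qcls M N hdesc hstable r (fun m => b m - b (m + 1)) hd).trans ?_
  rw [lcls_zero]
  refine (lcls_eq_iff M N hdesc hstable r _ _ _ _ _ _).mpr ⟨fun _ => b 0, fun m => ?_, fun m => ?_⟩
  · rw [sub_self]
    exact Submodule.zero_mem _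
  · have h1 := Finset.sum_range_sub' (fun i => M.delta r (b i)) m
    simp only [map_sub, sub_zero, h1, sub_sub_cancel]
    exact (delta_mem_iff M N m r _).mpr (hb m)

/-- If the partial sums are the coboundary of `(e_m)`, the sequence `(b_m)` is `∂` of the classes
of `e_m - ∑_{i<m} b_i`. -/
theorem exists_of_sigmaMap_eq_zero (r : ℤ) (a : ∀ m, (towerQ M N hstable m).H (r - 1))
    (ha : sigmaMap M N hdesc hstable r a = 0) :
    ∃ c : ∀ m, (towerQ M N hstable m).H (r - 1), ∀ m,
      a m = c m - towerHproj M N hdesc hstable m (r - 1) (c (m + 1)) := by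
  obtain ⟨b, hb, rfl⟩ := exists_qcls_seq M N hstable (r - 1) a
  rw [sigmaMap_qcls, lcls_zero] at ha
  obtain ⟨e, hec, he⟩ := (lcls_eq_iff M N hdesc hstable r _ _ _ _ _ _).mp ha
  have hd : ∀ m, M.d (r - 1) (e m - ∑ i ∈ Finset.range m, b i) ∈ N m ((r - 1) + 1) := fun m => by
    rw [← delta_mem_iff, map_sub, map_sum]
    simpa only [sub_zero] using he m
  refine ⟨fun m => qcls M N hstable m (r - 1) _ (hd m), fun m => ?_⟩
  have hd' := Submodule.sub_mem _ (hd m) (hdesc m _ (hd (m + 1)))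
  rw [← map_sub] at hd'
  rw [towerHproj_qcls, qcls_sub M N hstable m _ _ _ _ _ hd']
  refine (qcls_eq_iff M N hstable m _ _ _ _ _).mpr ⟨0, ?_⟩
  rw [map_zero, Finset.sum_range_succ]
  convert Submodule.neg_mem _ (hec m) using 1
  abel

theorem towerHlimProj_sigmaMap (r : ℤ) (a : ∀ m, (towerQ M N hstable m).H (r - 1)) (m : ℕ) :
    towerHlimProj M N hdesc hstable m r (sigmaMap M N hdesc hstable r a) = 0 := by
  obtain ⟨b, hb, rfl⟩ := exists_qcls_seq M N hstable (r - 1) a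
  rw [sigmaMap_qcls, sigmaCls, towerHlimProj_lcls, qcls_zero]
  refine (qcls_eq_iff M N hstable m _ _ _ _ _).mpr ⟨∑ i ∈ Finset.range m, b i, ?_⟩
  rw [map_sum, sub_zero, sub_self]
  exact Submodule.zero_mem _

/-- If each `x_m` is congruent to `d e_m` modulo `N_m`, the class of `(x_m)` is `σ` of the classes
of `e_{m+1} - e_m`; the two differ by the coboundary of the constant sequence `e_0`. -/
theorem exists_sigmaMap_eq (r : ℤ) (α : (towerLim M N hdesc hstable).H r)
    (hα : ∀ m, towerHlimProj M N hdesc hstable m r α = 0) :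
    ∃ a, sigmaMap M N hdesc hstable r a = α := by
  obtain ⟨x, hc, hx, rfl⟩ := exists_lcls M N hdesc hstable r α
  have h1 : ∀ m, ∃ e, M.delta r e - x m ∈ N m r := fun m => by
    have h2 := hα m
    rw [towerHlimProj_lcls, qcls_zero] at h2
    obtain ⟨e, he⟩ := (qcls_eq_iff M N hstable m _ _ _ _ _).mp h2
    exact ⟨e, by rwa [sub_zero] at he⟩
  choose e he using h1
  have hd : ∀ m, M.d (r - 1) (e (m + 1) - e m) ∈ N m ((r - 1) + 1) := fun m => by
    rw [← delta_mem_iff, map_sub]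
    convert Submodule.add_mem _ (Submodule.sub_mem _ (hdesc m _ (he (m + 1))) (he m)) (hc m)
      using 1
    abel
  refine ⟨_, (sigmaMap_qcls M N hdesc hstable r _ hd).trans ?_⟩
  refine (lcls_eq_iff M N hdesc hstable r _ _ _ _ _ _).mpr
    ⟨fun _ => - e 0, fun m => ?_, fun m => ?_⟩
  · rw [sub_self]
    exact Submodule.zero_mem _
  · have h1 := Finset.sum_range_sub (fun i => M.delta r (e i)) m
    simp only [map_sub, map_neg, h1]
    convert Submodule.neg_mem _ (he m) using 1
    abel

theorem towerHlimProj_compat (r : ℤ) (α : (towerLim M N hdesc hstable).H r) (m : ℕ) :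
    towerHlimProj M N hdesc hstable m r α -
      towerHproj M N hdesc hstable m r (towerHlimProj M N hdesc hstable (m + 1) r α) = 0 := by
  obtain ⟨x, hc, hx, rfl⟩ := exists_lcls M N hdesc hstable r α
  rw [towerHlimProj_lcls, towerHlimProj_lcls, towerHproj_qcls, sub_eq_zero]
  refine (qcls_eq_iff M N hstable m _ _ _ _ _).mpr ⟨0, ?_⟩
  rw [map_zero, zero_sub, neg_sub]
  exact hc m

/-- If `x_m - x_{m+1} ≡ d e_m` modulo `N_m`, the corrected cocycles `x_m + ∑_{i<m} d e_i` are
compatible and represent the same classes. -/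
theorem exists_lift_of_compat (r : ℤ) (c : ∀ m, (towerQ M N hstable m).H r)
    (hcc : ∀ m, c m - towerHproj M N hdesc hstable m r (c (m + 1)) = 0) :
    ∃ α, ∀ m, towerHlimProj M N hdesc hstable m r α = c m := by
  obtain ⟨x, hx, rfl⟩ := exists_qcls_seq M N hstable r c
  have h1 : ∀ m, ∃ e, M.delta r e - (x m - x (m + 1)) ∈ N m r := fun m => by
    have h2 := hcc m
    rw [towerHproj_qcls, sub_eq_zero] at h2
    exact (qcls_eq_iff M N hstable m _ _ _ _ _).mp h2
  choose e he using h1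
  refine ⟨lcls M N hdesc hstable r (fun m => x m + ∑ i ∈ Finset.range m, M.delta r (e i))
    (fun m => ?_) (fun m => ?_), fun m => ?_⟩
  · rw [Finset.sum_range_succ]
    convert he m using 1
    abel
  · rw [map_add, map_sum, Finset.sum_eq_zero fun i _ => M.d_delta r (e i), add_zero]
    exact hx m
  · rw [towerHlimProj_lcls]
    refine (qcls_eq_iff M N hstable m _ _ _ _ _).mpr ⟨∑ i ∈ Finset.range m, e i, ?_⟩
    rw [map_sum, add_sub_cancel_left, sub_self]
    exact Submodule.zero_mem _

/-- For a cochain complex `M` of `k`-vector spaces and a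
descending sequence of subcomplexes `N_m ⊆ M`, there is, for every `r`, a
natural exact sequence
`∏ h^{r−1}(M/N_m) → ∏ h^{r−1}(M/N_m) → h^r(lim M/N_m) → ∏ h^r(M/N_m) → ∏ h^r(M/N_m)`,
where the two outer maps are `(a_m) ↦ (a_m − a_{m+1})`, the map into
`∏ h^r` is induced by the projections, and `σ` sends the sequence of classes of
`b_m` to the class of the compatible sequence with `m`-th entry
`∑_{i<m} d b_i`. -/
theorem statement18 (k : Type) [Field k] (M : FCx k)
    (N : ℕ → ∀ n : ℤ, Submodule k (M.X n))
    (hdesc : ∀ m n, N (m + 1) n ≤ N m n)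
    (hstable : ∀ m n, N m n ≤ (N m (n + 1)).comap (M.d n))
    (r : ℤ) :
    ∃ σ : (∀ m, (towerQ M N hstable m).H (r - 1)) →
        (towerLim M N hdesc hstable).H r,
      -- σ is given by the formula of the lemma:
      (∀ (b : ∀ _ : ℕ, M.X (r - 1))
        (hb : ∀ m, M.d (r - 1) (b m) ∈ N m ((r - 1) + 1))
        (a : ∀ m, (towerQ M N hstable m).H (r - 1))
        (ha : ∀ m, a m = (towerQ M N hstable m).cls (r - 1)
          (Submodule.Quotient.mk (b m))
          ((Submodule.Quotient.mk_eq_zero _).mpr (hb m)))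
        (C : ↥(towerLimSub M N hdesc hstable r))
        (hC : ∀ m, C.1 m =
          Submodule.Quotient.mk (∑ i ∈ Finset.range m,
            M.cast (by omega : (r - 1) + 1 = r) (M.d (r - 1) (b i))))
        (hCd : (towerLim M N hdesc hstable).d r C = 0),
        σ a = (towerLim M N hdesc hstable).cls r C hCd) ∧
      -- exactness at the second `∏ h^{r-1}`:
      (∀ a : ∀ m, (towerQ M N hstable m).H (r - 1),
        σ (fun m => a m - towerHproj M N hdesc hstable m (r - 1) (a (m + 1))) = 0) ∧
      (∀ a : ∀ m, (towerQ M N hstable m).H (r - 1), σ a = 0 →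
        ∃ c : ∀ m, (towerQ M N hstable m).H (r - 1), ∀ m,
        a m = c m - towerHproj M N hdesc hstable m (r - 1) (c (m + 1))) ∧
      -- exactness at `h^r (lim)`:
      (∀ (a : ∀ m, (towerQ M N hstable m).H (r - 1)) (m : ℕ),
        towerHlimProj M N hdesc hstable m r (σ a) = 0) ∧
      (∀ α : (towerLim M N hdesc hstable).H r,
        (∀ m, towerHlimProj M N hdesc hstable m r α = 0) → ∃ a, σ a = α) ∧
      -- exactness at the first `∏ h^r`:
      (∀ (α : (towerLim M N hdesc hstable).H r) (m : ℕ),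
        towerHlimProj M N hdesc hstable m r α -
        towerHproj M N hdesc hstable m r (towerHlimProj M N hdesc hstable (m + 1) r α) = 0) ∧
      (∀ c : ∀ m, (towerQ M N hstable m).H r,
        (∀ m, c m - towerHproj M N hdesc hstable m r (c (m + 1)) = 0) →
        ∃ α, ∀ m, towerHlimProj M N hdesc hstable m r α = c m) := by
  refine ⟨sigmaMap M N hdesc hstable r, ?_, sigmaMap_diff M N hdesc hstable r,
    exists_of_sigmaMap_eq_zero M N hdesc hstable r, towerHlimProj_sigmaMap M N hdesc hstable r,
    exists_sigmaMap_eq M N hdesc hstable r, towerHlimProj_compat M N hdesc hstable r,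
    exists_lift_of_compat M N hdesc hstable r⟩
  intro b hb a ha C hC hCd
  obtain rfl : a = fun m => qcls M N hstable m (r - 1) (b m) (hb m) := funext ha
  rw [sigmaMap_qcls]
  obtain ⟨C, _⟩ := C
  obtain rfl : C = fun m => (Submodule.Quotient.mk (∑ i ∈ Finset.range m, M.delta r (b i)) :
    M.X r ⧸ N m r) := funext hC
  rfl
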